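/- arXiv:0801.0300 — 2 statements merged into one kernel-verified Lean document; each statement's English description precedes it below -/
import Mathlib

section
/- (Eighth-order obstruction in the degenerate case) Let A₁ = A₂ = A₃ = 0 and let A₀ be smooth on a connected open U ⊆ ℝ² with ∂_y³A₀ ≠ 0 and 5∂_y²A₀ + y∂_y³A₀ ≠ 0 throughout U. If the Liouville linear system admits a smooth solution (ψ₁,ψ₂,ψ₃) on U, then at every point of U where ψ₁ψ₃ − ψ₂² ≠ 0 the identity 7(∂_y³A₀)(∂_y⁴A₀)(∂ₓ∂_y³A₀) − 5(∂ₓ∂_y³A₀)(∂_y⁵A₀)(∂_y²A₀) − 6(∂ₓ∂_y⁴A₀)(∂_y³A₀)² + 6(∂_y⁵A₀)(∂ₓ∂_y²A₀)(∂_y³A₀) − 7(∂_y⁴A₀)²(∂ₓ∂_y²A₀) + 5(∂ₓ∂_y⁴A₀)(∂_y⁴A₀)(∂_y²A₀) = 0 holds. -/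
/-!
Write `a = A0` and subscripts for partial derivatives. The system reads `ψ3_y = 0`,
`ψ3_x = -2 ψ2_y`, `ψ1_x = -2 a ψ2`, `ψ1_y = -2 a ψ3 - 2 ψ2_x`; the first two equations give
`ψ2_yy = 0`. Equality of the mixed second derivatives of `ψ1` gives
`a_y ψ2 + 3 a ψ2_y - a_x ψ3 = ψ2_xx` (`compat`). Each `y`-derivative of a relation
`f ψ2 + g ψ2_y - h ψ3 = k` is again of this shape, with `f_y`, `f + g_y`, `h_y`, `k_y`
(`prolong`), and the right-hand side `ψ2_xx` disappears after two of them. The second, third and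
fourth `y`-derivatives are therefore three homogeneous linear equations for `(ψ2, ψ2_y, ψ3)`,
whose determinant is the claimed expression. Where it does not vanish, `ψ2 = ψ3 = 0`, so
`ψ1 ψ3 - ψ2 ^ 2 = 0`.
-/


noncomputable section

open Matrix

/-- Partial derivative in the first (x) variable. -/
def pdx (f : ℝ × ℝ → ℝ) : ℝ × ℝ → ℝ :=
  fun p => deriv (fun t => f (t, p.2)) p.1

/-- Partial derivative in the second (y) variable. -/
def pdy (f : ℝ × ℝ → ℝ) : ℝ × ℝ → ℝ :=
  fun p => deriv (fun t => f (p.1, t)) p.2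

/-- `pd 0 = ∂ₓ`, `pd 1 = ∂_y`. -/
def pd : Fin 2 → (ℝ × ℝ → ℝ) → (ℝ × ℝ → ℝ) := ![pdx, pdy]

/-- The Liouville linear system associated to `(A0, A1, A2, A3)`, holding on `U`. -/
def LiouvilleSystem (U : Set (ℝ × ℝ)) (A0 A1 A2 A3 ψ1 ψ2 ψ3 : ℝ × ℝ → ℝ) : Prop :=
  ∀ p ∈ U,
    pdx ψ1 p = (2/3) * A1 p * ψ1 p - 2 * A0 p * ψ2 p ∧
    pdy ψ3 p = 2 * A3 p * ψ2 p - (2/3) * A2 p * ψ3 p ∧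
    pdy ψ1 p + 2 * pdx ψ2 p
      = (4/3) * A2 p * ψ1 p - (2/3) * A1 p * ψ2 p - 2 * A0 p * ψ3 p ∧
    pdx ψ3 p + 2 * pdy ψ2 p
      = 2 * A3 p * ψ1 p - (4/3) * A1 p * ψ3 p + (2/3) * A2 p * ψ2 p

/-- `(A0, A1, A2, A3)` is metrisable near `p` (within `U`). -/
def MetrisableNear (U : Set (ℝ × ℝ)) (A0 A1 A2 A3 : ℝ × ℝ → ℝ) (p : ℝ × ℝ) : Prop :=
  ∃ V : Set (ℝ × ℝ), IsOpen V ∧ p ∈ V ∧ V ⊆ U ∧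
    ∃ E F G : ℝ × ℝ → ℝ,
      ContDiffOn ℝ (⊤ : ℕ∞) E V ∧ ContDiffOn ℝ (⊤ : ℕ∞) F V ∧ ContDiffOn ℝ (⊤ : ℕ∞) G V ∧
      (∀ q ∈ V, E q * G q - (F q) ^ 2 ≠ 0) ∧
      (∀ q ∈ V,
        A0 q = (E q * pdy E q - 2 * E q * pdx F q + F q * pdx E q)
                 / (2 * (E q * G q - (F q) ^ 2)) ∧
        A1 q = (3 * F q * pdy E q + G q * pdx E q - 2 * F q * pdx F q - 2 * E q * pdx G q)
                 / (2 * (E q * G q - (F q) ^ 2)) ∧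
        A2 q = (2 * F q * pdy F q + 2 * G q * pdy E q - 3 * F q * pdx G q - E q * pdy G q)
                 / (2 * (E q * G q - (F q) ^ 2)) ∧
        A3 q = (2 * G q * pdy F q - G q * pdx G q - F q * pdy G q)
                 / (2 * (E q * G q - (F q) ^ 2)))

end

section PartialDerivatives

variable {U : Set (ℝ × ℝ)} {f g : ℝ × ℝ → ℝ} {p : ℝ × ℝ}

private lemma hasFDerivAt_of_smooth (hU : IsOpen U) (hf : ContDiffOn ℝ (⊤ : ℕ∞) f U)
    (hp : p ∈ U) : HasFDerivAt f (fderiv ℝ f p) p :=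
  ((hf.contDiffAt (hU.mem_nhds hp)).differentiableAt (by simp)).hasFDerivAt

private lemma hasDerivAt_fst (hU : IsOpen U) (hf : ContDiffOn ℝ (⊤ : ℕ∞) f U) (hp : p ∈ U) :
    HasDerivAt (fun t => f (t, p.2)) (fderiv ℝ f p (1, 0)) p.1 :=
  (hasFDerivAt_of_smooth hU hf hp).comp_hasDerivAt p.1
    ((hasDerivAt_id p.1).prodMk (hasDerivAt_const p.1 p.2))

private lemma hasDerivAt_snd (hU : IsOpen U) (hf : ContDiffOn ℝ (⊤ : ℕ∞) f U) (hp : p ∈ U) :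
    HasDerivAt (fun t => f (p.1, t)) (fderiv ℝ f p (0, 1)) p.2 :=
  (hasFDerivAt_of_smooth hU hf hp).comp_hasDerivAt p.2
    ((hasDerivAt_const p.2 p.1).prodMk (hasDerivAt_id p.2))

private lemma pdx_eq (hU : IsOpen U) (hf : ContDiffOn ℝ (⊤ : ℕ∞) f U) (hp : p ∈ U) :
    pdx f p = fderiv ℝ f p (1, 0) := (hasDerivAt_fst hU hf hp).deriv

private lemma pdy_eq (hU : IsOpen U) (hf : ContDiffOn ℝ (⊤ : ℕ∞) f U) (hp : p ∈ U) :
    pdy f p = fderiv ℝ f p (0, 1) := (hasDerivAt_snd hU hf hp).deriv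

private lemma hasDerivAt_pdx (hU : IsOpen U) (hf : ContDiffOn ℝ (⊤ : ℕ∞) f U) (hp : p ∈ U) :
    HasDerivAt (fun t => f (t, p.2)) (pdx f p) p.1 := by
  rw [pdx_eq hU hf hp]; exact hasDerivAt_fst hU hf hp

private lemma hasDerivAt_pdy (hU : IsOpen U) (hf : ContDiffOn ℝ (⊤ : ℕ∞) f U) (hp : p ∈ U) :
    HasDerivAt (fun t => f (p.1, t)) (pdy f p) p.2 := by
  rw [pdy_eq hU hf hp]; exact hasDerivAt_snd hU hf hp

private lemma smooth_fderiv_apply (hU : IsOpen U) (hf : ContDiffOn ℝ (⊤ : ℕ∞) f U)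
    (v : ℝ × ℝ) : ContDiffOn ℝ (⊤ : ℕ∞) (fun p => fderiv ℝ f p v) U :=
  (hf.fderiv_of_isOpen hU (by simp)).clm_apply contDiffOn_const

private lemma smooth_pdx (hU : IsOpen U) (hf : ContDiffOn ℝ (⊤ : ℕ∞) f U) :
    ContDiffOn ℝ (⊤ : ℕ∞) (pdx f) U :=
  (smooth_fderiv_apply hU hf (1, 0)).congr fun _ hp => pdx_eq hU hf hp

private lemma smooth_pdy (hU : IsOpen U) (hf : ContDiffOn ℝ (⊤ : ℕ∞) f U) :
    ContDiffOn ℝ (⊤ : ℕ∞) (pdy f) U :=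
  (smooth_fderiv_apply hU hf (0, 1)).congr fun _ hp => pdy_eq hU hf hp

private lemma eventually_fst (hU : IsOpen U) (h : Set.EqOn f g U) (hp : p ∈ U) :
    (fun t => f (t, p.2)) =ᶠ[nhds p.1] fun t => g (t, p.2) := by
  have hc : ContinuousAt (fun t : ℝ => (t, p.2)) p.1 := by fun_prop
  filter_upwards [hc.eventually (hU.mem_nhds hp)] with t ht using h ht

private lemma eventually_snd (hU : IsOpen U) (h : Set.EqOn f g U) (hp : p ∈ U) :
    (fun t => f (p.1, t)) =ᶠ[nhds p.2] fun t => g (p.1, t) := by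
  have hc : ContinuousAt (fun t : ℝ => (p.1, t)) p.2 := by fun_prop
  filter_upwards [hc.eventually (hU.mem_nhds hp)] with t ht using h ht

private lemma pdx_congr (hU : IsOpen U) (h : Set.EqOn f g U) : Set.EqOn (pdx f) (pdx g) U :=
  fun _ hp => (eventually_fst hU h hp).deriv_eq

private lemma pdy_congr (hU : IsOpen U) (h : Set.EqOn f g U) : Set.EqOn (pdy f) (pdy g) U :=
  fun _ hp => (eventually_snd hU h hp).deriv_eq

private lemma pdx_pdy_comm (hU : IsOpen U) (hf : ContDiffOn ℝ (⊤ : ℕ∞) f U) :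
    Set.EqOn (pdx (pdy f)) (pdy (pdx f)) U := by
  intro p hp
  have hd : HasFDerivAt (fderiv ℝ f) (fderiv ℝ (fderiv ℝ f) p) p :=
    (((hf.fderiv_of_isOpen hU (m := (⊤ : ℕ∞)) (by simp)).contDiffAt
      (hU.mem_nhds hp)).differentiableAt (by simp)).hasFDerivAt
  have key : ∀ v w : ℝ × ℝ, fderiv ℝ (fun q => fderiv ℝ f q v) p w
      = fderiv ℝ (fderiv ℝ f) p w v := by
    intro v w
    rw [(hd.clm_apply (hasFDerivAt_const v p)).fderiv]
    simp
  have hsymm : IsSymmSndFDerivAt ℝ f p :=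
    (hf.contDiffAt (hU.mem_nhds hp)).isSymmSndFDerivAt (by
      rw [minSmoothness_of_isRCLikeNormedField]; exact WithTop.coe_le_coe.mpr (le_top : (2 : ℕ∞) ≤ ⊤))
  rw [pdx_congr hU (fun q hq => pdy_eq hU hf hq) hp,
    pdy_congr hU (fun q hq => pdx_eq hU hf hq) hp,
    pdx_eq hU (smooth_fderiv_apply hU hf _) hp, pdy_eq hU (smooth_fderiv_apply hU hf _) hp,
    key, key]
  exact hsymm _ _

private lemma smooth_pdy_iter (hU : IsOpen U) (hf : ContDiffOn ℝ (⊤ : ℕ∞) f U) (n : ℕ) :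
    ContDiffOn ℝ (⊤ : ℕ∞) (pdy^[n] f) U := by
  induction n with
  | zero => exact hf
  | succ n ih => rw [Function.iterate_succ_apply']; exact smooth_pdy hU ih

/-- Leibniz rule for `∂_y` applied to a relation `f u + g u_y - h w = k`, in the case where
`u_yy = 0` and `w_y = 0`. -/
private lemma prolong (hU : IsOpen U) {h k u w : ℝ × ℝ → ℝ}
    (hf : ContDiffOn ℝ (⊤ : ℕ∞) f U) (hg : ContDiffOn ℝ (⊤ : ℕ∞) g U)
    (hh : ContDiffOn ℝ (⊤ : ℕ∞) h U) (hu : ContDiffOn ℝ (⊤ : ℕ∞) u U)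
    (hw : ContDiffOn ℝ (⊤ : ℕ∞) w U)
    (huyy : ∀ p ∈ U, pdy (pdy u) p = 0) (hwy : ∀ p ∈ U, pdy w p = 0)
    (H : ∀ p ∈ U, f p * u p + g p * pdy u p - h p * w p = k p) :
    ∀ p ∈ U, pdy f p * u p + (f p + pdy g p) * pdy u p - pdy h p * w p = pdy k p := by
  intro p hp
  have h1 := (((hasDerivAt_pdy hU hf hp).mul (hasDerivAt_pdy hU hu hp)).add
    ((hasDerivAt_pdy hU hg hp).mul (hasDerivAt_pdy hU (smooth_pdy hU hu) hp))).sub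
    ((hasDerivAt_pdy hU hh hp).mul (hasDerivAt_pdy hU hw hp))
  have h2 : pdy (fun p => f p * u p + g p * pdy u p - h p * w p) p = _ := h1.deriv
  rw [pdy_congr hU (g := k) H hp, huyy p hp, hwy p hp] at h2
  simp only [Prod.mk.eta] at h2
  linarith

end PartialDerivatives

/-- Equality of the mixed second derivatives of `ψ1` for the system with `A1 = A2 = A3 = 0`. -/
private lemma compat {U : Set (ℝ × ℝ)} (hU : IsOpen U) {a ψ1 ψ2 ψ3 : ℝ × ℝ → ℝ}
    (ha : ContDiffOn ℝ (⊤ : ℕ∞) a U) (hψ1 : ContDiffOn ℝ (⊤ : ℕ∞) ψ1 U)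
    (hψ2 : ContDiffOn ℝ (⊤ : ℕ∞) ψ2 U) (hψ3 : ContDiffOn ℝ (⊤ : ℕ∞) ψ3 U)
    (e1 : ∀ p ∈ U, pdx ψ1 p = -2 * (a p * ψ2 p))
    (e2 : ∀ p ∈ U, pdy ψ1 p = -2 * (a p * ψ3 p) - 2 * pdx ψ2 p)
    (e3 : ∀ p ∈ U, pdx ψ3 p = -2 * pdy ψ2 p) :
    ∀ p ∈ U, pdy a p * ψ2 p + 3 * a p * pdy ψ2 p - pdx a p * ψ3 p = pdx (pdx ψ2) p := by
  intro p hp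
  have hy : pdy (fun p => -2 * (a p * ψ2 p)) p = _ :=
    (((hasDerivAt_pdy hU ha hp).mul (hasDerivAt_pdy hU hψ2 hp)).const_mul (-2)).deriv
  have hx : pdx (fun p => -2 * (a p * ψ3 p) - 2 * pdx ψ2 p) p = _ :=
    ((((hasDerivAt_pdx hU ha hp).mul (hasDerivAt_pdx hU hψ3 hp)).const_mul (-2)).sub
      ((hasDerivAt_pdx hU (smooth_pdx hU hψ2) hp).const_mul 2)).deriv
  rw [← pdy_congr hU e1 hp, ← pdx_pdy_comm hU hψ1 hp] at hy
  rw [← pdx_congr hU e2 hp, hy, e3 p hp] at hx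
  simp only [Prod.mk.eta] at hx
  linarith

/-- **Eighth-order obstruction in the degenerate case** `A₁ = A₂ = A₃ = 0`. -/
theorem degenerate_eighth_order_obstruction (U : Set (ℝ × ℝ)) (hU : IsOpen U)
    (hUconn : IsConnected U) (A0 : ℝ × ℝ → ℝ) (hA0 : ContDiffOn ℝ (⊤ : ℕ∞) A0 U)
    (hnd1 : ∀ q ∈ U, pdy^[3] A0 q ≠ 0)
    (hnd2 : ∀ q ∈ U, 5 * pdy^[2] A0 q + q.2 * pdy^[3] A0 q ≠ 0)
    (ψ1 ψ2 ψ3 : ℝ × ℝ → ℝ)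
    (hψ1 : ContDiffOn ℝ (⊤ : ℕ∞) ψ1 U) (hψ2 : ContDiffOn ℝ (⊤ : ℕ∞) ψ2 U) (hψ3 : ContDiffOn ℝ (⊤ : ℕ∞) ψ3 U)
    (hsys : LiouvilleSystem U A0 (fun _ => 0) (fun _ => 0) (fun _ => 0) ψ1 ψ2 ψ3) :
    ∀ q ∈ U, ψ1 q * ψ3 q - (ψ2 q) ^ 2 ≠ 0 →
      7 * (pdy^[3] A0 q) * (pdy^[4] A0 q) * (pdx (pdy^[3] A0) q)
        - 5 * (pdx (pdy^[3] A0) q) * (pdy^[5] A0 q) * (pdy^[2] A0 q)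
        - 6 * (pdx (pdy^[4] A0) q) * (pdy^[3] A0 q) ^ 2
        + 6 * (pdy^[5] A0 q) * (pdx (pdy^[2] A0) q) * (pdy^[3] A0 q)
        - 7 * (pdy^[4] A0 q) ^ 2 * (pdx (pdy^[2] A0) q)
        + 5 * (pdx (pdy^[4] A0) q) * (pdy^[4] A0 q) * (pdy^[2] A0 q) = 0 := by
  have e3 : ∀ p ∈ U, pdx ψ3 p = -2 * pdy ψ2 p := fun p hp => by
    have := (hsys p hp).2.2.2
    linarith
  have hψ3y : ∀ p ∈ U, pdy ψ3 p = 0 := fun p hp => by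
    have := (hsys p hp).2.1
    linarith
  have zero_x : ∀ p, pdx (fun _ => (0 : ℝ)) p = 0 := fun p => by simp [pdx]
  have zero_y : ∀ p, pdy (fun _ => (0 : ℝ)) p = 0 := fun p => by simp [pdy]
  have hψ2yy : ∀ p ∈ U, pdy (pdy ψ2) p = 0 := fun p hp => by
    have h1 : pdy (fun p => -2 * pdy ψ2 p) p = _ :=
      ((hasDerivAt_pdy hU (smooth_pdy hU hψ2) hp).const_mul (-2)).deriv
    rw [← pdy_congr hU e3 hp, ← pdx_pdy_comm hU hψ3 hp,
      pdx_congr hU (g := fun _ => 0) hψ3y hp, zero_x] at h1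
    linarith
  have hψ2xxyy : ∀ p ∈ U, pdy (pdy (pdx (pdx ψ2))) p = 0 := fun p hp => by
    have h1 : Set.EqOn (pdy (pdx (pdx ψ2))) (pdx (pdx (pdy ψ2))) U := fun r hr => by
      rw [← pdx_pdy_comm hU (smooth_pdx hU hψ2) hr,
        pdx_congr hU (pdx_pdy_comm hU hψ2) hr]
    have h2 : Set.EqOn (pdx (pdy (pdy ψ2))) (fun _ => 0) U := fun r hr => by
      rw [pdx_congr hU (g := fun _ => 0) hψ2yy hr, zero_x]
    rw [pdy_congr hU h1 hp, ← pdx_pdy_comm hU (smooth_pdx hU (smooth_pdy hU hψ2)) hp,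
      ← pdx_congr hU (pdx_pdy_comm hU (smooth_pdy hU hψ2)) hp, pdx_congr hU h2 hp, zero_x]
  have sa := smooth_pdy_iter hU hA0
  have sxa : ∀ n, ContDiffOn ℝ (⊤ : ℕ∞) (pdx (pdy^[n] A0)) U := fun n => smooth_pdx hU (sa n)
  -- One `y`-derivative of the relation with coefficients `∂_y^(n+1) a`, `c ∂_y^n a`, `∂_x ∂_y^n a`.
  have step : ∀ (n : ℕ) (c : ℝ) (k : ℝ × ℝ → ℝ),
      (∀ p ∈ U, pdy^[n + 1] A0 p * ψ2 p + c * pdy^[n] A0 p * pdy ψ2 p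
        - pdx (pdy^[n] A0) p * ψ3 p = k p) →
      ∀ p ∈ U, pdy^[n + 2] A0 p * ψ2 p + (c + 1) * pdy^[n + 1] A0 p * pdy ψ2 p
        - pdx (pdy^[n + 1] A0) p * ψ3 p = pdy k p := by
    intro n c k H p hp
    have h1 := prolong hU (sa (n + 1)) (contDiffOn_const.mul (sa n) :
      ContDiffOn ℝ (⊤ : ℕ∞) (fun p => c * pdy^[n] A0 p) U) (sxa n) hψ2 hψ3 hψ2yy hψ3y H p hp
    have h2 : pdy (fun p => c * pdy^[n] A0 p) p = _ :=
      ((hasDerivAt_pdy hU (sa n) hp).const_mul c).deriv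
    rw [h2, ← pdx_pdy_comm hU (sa n) hp] at h1
    simp only [← Function.iterate_succ_apply' pdy] at h1
    linarith
  have r0 := compat hU hA0 hψ1 hψ2 hψ3
    (fun p hp => by
      have := (hsys p hp).1
      linarith)
    (fun p hp => by
      have := (hsys p hp).2.2.1
      linarith) e3
  have r1 := step 0 3 _ r0
  have r2 : ∀ p ∈ U, pdy^[3] A0 p * ψ2 p + (3 + 1 + 1) * pdy^[2] A0 p * pdy ψ2 p
      - pdx (pdy^[2] A0) p * ψ3 p = 0 := fun p hp =>
    (step 1 _ _ r1 p hp).trans (hψ2xxyy p hp)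
  have r3 : ∀ p ∈ U, pdy^[4] A0 p * ψ2 p + (3 + 1 + 1 + 1) * pdy^[3] A0 p * pdy ψ2 p
      - pdx (pdy^[3] A0) p * ψ3 p = 0 := fun p hp =>
    (step 2 _ (fun _ => 0) r2 p hp).trans (zero_y p)
  have r4 : ∀ p ∈ U, pdy^[5] A0 p * ψ2 p + (3 + 1 + 1 + 1 + 1) * pdy^[4] A0 p * pdy ψ2 p
      - pdx (pdy^[4] A0) p * ψ3 p = 0 := fun p hp =>
    (step 3 _ (fun _ => 0) r3 p hp).trans (zero_y p)
  intro q hq hne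
  have s2 := r2 q hq
  have s3 := r3 q hq
  have s4 := r4 q hq
  generalize pdy^[2] A0 q = a2 at *
  generalize pdy^[3] A0 q = a3 at *
  generalize pdy^[4] A0 q = a4 at *
  generalize pdy^[5] A0 q = a5 at *
  generalize pdx (pdy^[2] A0) q = b2 at *
  generalize pdx (pdy^[3] A0) q = b3 at *
  generalize pdx (pdy^[4] A0) q = b4 at *
  by_contra hdet
  -- Cramer's rule: the coefficients below are cofactors of the matrix of the linear system.
  have z2 : ψ2 q = 0 := by
    refine (mul_eq_zero.mp ?_).resolve_left hdet
    linear_combination (-6 * a3 * b4 + 7 * a4 * b3) * s2 + (5 * a2 * b4 - 7 * a4 * b2) * s3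
      + (-5 * a2 * b3 + 6 * a3 * b2) * s4
  have z3 : ψ3 q = 0 := by
    refine (mul_eq_zero.mp ?_).resolve_left hdet
    linear_combination (7 * a4 ^ 2 - 6 * a3 * a5) * s2 + (5 * a2 * a5 - 7 * a3 * a4) * s3
      + (6 * a3 ^ 2 - 5 * a2 * a4) * s4
  exact hne (by rw [z2, z3]; ring)
end

section
/- (Prolongation theorem for metrisability) With ∇, ε^{bc} and P_{ab} as above, the connection ∇ is projectively equivalent to a Levi–Civita connection on U if and only if there exist smooth tensor fields σ^{ab} = σ^{ba}, μ^a and ρ on U with det(σ^{ab}) nowhere vanishing, satisfying the closed linear system ∇_aσ^{bc} − δ_a^bμ^c − δ_a^cμ^b = 0, ∇_aμ^b − δ_a^bρ + P_{ac}σ^{bc} = 0, and ∇_aρ + 2P_{ab}μ^b − 2Y_{abc}σ^{bc} = 0, where Y_{abc} := (1/2)(∇_aP_{bc} − ∇_bP_{ac}). -/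
/-!
The core is the metrisability equation `∇_aσ^{bc} = δ_a^bμ^c + δ_a^cμ^b`, the first equation of the
system.

Nondegenerate solutions `σ` correspond to metrics `g` in the projective class of `∇`. If `g` has
Levi–Civita connection `Γᶜ_{ab} + δᶜ_aω_b + δᶜ_bω_a`, then `∂_a log(ε² det g) = 6ω_a`, and therefore
`σ^{ab} = (ε² det g)^{1/3} g^{ab}` solves the equation with `μ^a = -σ^{ab}ω_b`
(`exists_sigma_of_metric`). Conversely, `g^{ab} = (det σ / ε²) σ^{ab}` and `ω_a = -(σ⁻¹)_{ab}μ^b`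
recover a metric (`metric_of_sigma`). Both computations use that a symmetric connection is the
Levi–Civita connection of `g` as soon as it annihilates `g` (`christoffel_iff_compat`).

The other two equations are consequences of the first, obtained by cross-differentiation.
Commuting derivatives on `σ`, with the curvature expressed through `P`, shows that
`∇_aμ^b + P_{ac}σ^{bc}` is pure trace, which defines `ρ` (`mu_equation`); commuting derivatives on
`μ` then determines `∇_aρ` (`rho_equation`).
-/

noncomputable section

open Matrix

/-- Covariant derivative `∇_a Y_c` of a one-form. -/
def covD1 (Γ : Fin 2 → Fin 2 → Fin 2 → ℝ × ℝ → ℝ) (Y : Fin 2 → ℝ × ℝ → ℝ) :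
    Fin 2 → Fin 2 → ℝ × ℝ → ℝ := fun a c q =>
  pd a (Y c) q - ∑ e : Fin 2, Γ e a c q * Y e q

/-- Covariant derivative `∇_a P_{bc}` of a covariant 2-tensor. -/
def covD2 (Γ : Fin 2 → Fin 2 → Fin 2 → ℝ × ℝ → ℝ) (P : Fin 2 → Fin 2 → ℝ × ℝ → ℝ) :
    Fin 2 → Fin 2 → Fin 2 → ℝ × ℝ → ℝ := fun a b c q =>
  pd a (P b c) q - ∑ e : Fin 2, Γ e a b q * P e c q - ∑ e : Fin 2, Γ e a c q * P b e q

/-- Covariant derivative `∇_a T_{bcd}` of a covariant 3-tensor. -/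
def covD3 (Γ : Fin 2 → Fin 2 → Fin 2 → ℝ × ℝ → ℝ)
    (T : Fin 2 → Fin 2 → Fin 2 → ℝ × ℝ → ℝ) :
    Fin 2 → Fin 2 → Fin 2 → Fin 2 → ℝ × ℝ → ℝ := fun a b c d q =>
  pd a (T b c d) q - ∑ e : Fin 2, Γ e a b q * T e c d q
    - ∑ e : Fin 2, Γ e a c q * T b e d q - ∑ e : Fin 2, Γ e a d q * T b c e q

/-- Curvature `Rᶜ_{abd}` of the torsion-free connection with symbols `Γᶜ_{ab}`. -/
def Rcurv (Γ : Fin 2 → Fin 2 → Fin 2 → ℝ × ℝ → ℝ) :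
    Fin 2 → Fin 2 → Fin 2 → Fin 2 → ℝ × ℝ → ℝ := fun c a b d q =>
  pd a (Γ c b d) q - pd b (Γ c a d) q
    + ∑ e : Fin 2, Γ c a e q * Γ e b d q - ∑ e : Fin 2, Γ c b e q * Γ e a d q

/-- The metric `g = E dx² + 2F dx dy + G dy²` as a matrix. -/
def gmat (E F G : ℝ × ℝ → ℝ) : ℝ × ℝ → Matrix (Fin 2) (Fin 2) ℝ := fun q =>
  !![E q, F q; F q, G q]

/-- Christoffel symbols `Γᶜ_{ab}` of the Levi–Civita connection of `g`. -/
def Christoffel (E F G : ℝ × ℝ → ℝ) (c a b : Fin 2) : ℝ × ℝ → ℝ := fun q =>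
  (1/2) * ∑ d : Fin 2, ((gmat E F G q)⁻¹ c d) *
    (pd a (fun r => gmat E F G r b d) q + pd b (fun r => gmat E F G r a d) q
      - pd d (fun r => gmat E F G r a b) q)

/-- `∇` (with symbols `Γ`) is projectively equivalent to a Levi–Civita connection on `U`:
there are a one-form `ω` and a nondegenerate metric `g` with
`Γᶜ_{ab} + δᶜ_aω_b + δᶜ_bω_a` the Christoffel symbols of `g`. -/
def ProjEquivLeviCivita (U : Set (ℝ × ℝ)) (Γ : Fin 2 → Fin 2 → Fin 2 → ℝ × ℝ → ℝ) : Prop :=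
  ∃ ω : Fin 2 → ℝ × ℝ → ℝ, (∀ a, ContDiffOn ℝ (⊤ : ℕ∞) (ω a) U) ∧
    ∃ E F G : ℝ × ℝ → ℝ,
      ContDiffOn ℝ (⊤ : ℕ∞) E U ∧ ContDiffOn ℝ (⊤ : ℕ∞) F U ∧ ContDiffOn ℝ (⊤ : ℕ∞) G U ∧
      (∀ q ∈ U, E q * G q - (F q) ^ 2 ≠ 0) ∧
      ∀ c a b : Fin 2, ∀ q ∈ U,
        Γ c a b q + (if c = a then ω b q else 0) + (if c = b then ω a q else 0)
          = Christoffel E F G c a b q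

end

/-! ### Calculus of partial derivatives on an open set -/

/-- `f` is differentiable at `q` and its partial derivative `∂_a f` there is `v`. -/
def HasPd (a : Fin 2) (f : ℝ × ℝ → ℝ) (v : ℝ) (q : ℝ × ℝ) : Prop :=
  DifferentiableAt ℝ f q ∧ pd a f q = v

/-- The coordinate vector `∂_a` of the plane. -/
def coordVec : Fin 2 → ℝ × ℝ := ![(1, 0), (0, 1)]

lemma pd_eq_fderiv {f : ℝ × ℝ → ℝ} {q : ℝ × ℝ} (hf : DifferentiableAt ℝ f q) (a : Fin 2) :
    pd a f q = fderiv ℝ f q (coordVec a) := by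
  fin_cases a
  · have h : HasDerivAt (fun t : ℝ => (t, q.2)) ((1 : ℝ), (0 : ℝ)) q.1 :=
      (hasDerivAt_id q.1).prodMk (hasDerivAt_const q.1 q.2)
    exact (hf.hasFDerivAt.comp_hasDerivAt q.1 h).deriv
  · have h : HasDerivAt (fun t : ℝ => (q.1, t)) ((0 : ℝ), (1 : ℝ)) q.2 :=
      (hasDerivAt_const q.2 q.1).prodMk (hasDerivAt_id q.2)
    exact (hf.hasFDerivAt.comp_hasDerivAt q.2 h).deriv

section PdRules

variable {U : Set (ℝ × ℝ)} {a : Fin 2} {f g : ℝ × ℝ → ℝ} {f' g' : ℝ} {q : ℝ × ℝ}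

lemma HasPd.add (hf : HasPd a f f' q) (hg : HasPd a g g' q) :
    HasPd a (fun r => f r + g r) (f' + g') q := by
  refine ⟨hf.1.add hg.1, ?_⟩
  rw [← hf.2, ← hg.2, pd_eq_fderiv hf.1, pd_eq_fderiv hg.1, pd_eq_fderiv (hf.1.fun_add hg.1),
    fderiv_fun_add hf.1 hg.1, _root_.add_apply]

lemma HasPd.mul (hf : HasPd a f f' q) (hg : HasPd a g g' q) :
    HasPd a (fun r => f r * g r) (f' * g q + f q * g') q := by
  refine ⟨hf.1.mul hg.1, ?_⟩
  rw [← hf.2, ← hg.2, pd_eq_fderiv hf.1, pd_eq_fderiv hg.1, pd_eq_fderiv (hf.1.fun_mul hg.1),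
    fderiv_fun_mul hf.1 hg.1]
  simp
  ring

lemma HasPd.const_mul (c : ℝ) (hf : HasPd a f f' q) : HasPd a (fun r => c * f r) (c * f') q := by
  refine ⟨hf.1.const_mul c, ?_⟩
  rw [← hf.2, pd_eq_fderiv hf.1, pd_eq_fderiv (hf.1.const_mul c), fderiv_const_mul hf.1]
  simp

lemma HasPd.neg (hf : HasPd a f f' q) : HasPd a (fun r => - f r) (-f') q := by
  simpa using hf.const_mul (-1)

lemma HasPd.sub (hf : HasPd a f f' q) (hg : HasPd a g g' q) :
    HasPd a (fun r => f r - g r) (f' - g') q := by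
  simpa [sub_eq_add_neg] using hf.add hg.neg

lemma hasPd_of_contDiffOn (hU : IsOpen U) (hf : ContDiffOn ℝ (⊤ : ℕ∞) f U) (hq : q ∈ U)
    (a : Fin 2) : HasPd a f (pd a f q) q :=
  ⟨(hf.contDiffAt (hU.mem_nhds hq)).differentiableAt (by simp), rfl⟩

/-- Partial derivatives on an open set depend only on the values there. -/
lemma HasPd.congr (hU : IsOpen U) (hq : q ∈ U) (hfg : ∀ r ∈ U, f r = g r)
    (hg : HasPd a g g' q) : HasPd a f g' q := by
  have he : f =ᶠ[nhds q] g := Filter.mem_of_superset (hU.mem_nhds hq) hfg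
  have hf : DifferentiableAt ℝ f q := hg.1.congr_of_eventuallyEq he
  refine ⟨hf, ?_⟩
  rw [← hg.2, pd_eq_fderiv hf, pd_eq_fderiv hg.1, he.fderiv_eq]

lemma contDiffOn_pd (hU : IsOpen U) (hf : ContDiffOn ℝ (⊤ : ℕ∞) f U) (a : Fin 2) :
    ContDiffOn ℝ (⊤ : ℕ∞) (pd a f) U := by
  have h : ContDiffOn ℝ (⊤ : ℕ∞) (fun r => fderiv ℝ f r (coordVec a)) U :=
    (hf.fderiv_of_isOpen hU (m := (⊤ : ℕ∞)) (by simp)).clm_apply contDiffOn_const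
  exact h.congr fun r hr => pd_eq_fderiv (hasPd_of_contDiffOn hU hf hr a).1 a

lemma pd_comm (hU : IsOpen U) (hf : ContDiffOn ℝ (⊤ : ℕ∞) f U) (hq : q ∈ U) (a b : Fin 2) :
    pd a (pd b f) q = pd b (pd a f) q := by
  have hd : DifferentiableAt ℝ (fderiv ℝ f) q :=
    ((hf.fderiv_of_isOpen hU (m := (⊤ : ℕ∞)) (by simp)).contDiffAt
      (hU.mem_nhds hq)).differentiableAt (by simp)
  have key : ∀ a b : Fin 2,
      pd a (pd b f) q = fderiv ℝ (fderiv ℝ f) q (coordVec a) (coordVec b) := by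
    intro a b
    have hd' : DifferentiableAt ℝ (fun r => fderiv ℝ f r (coordVec b)) q :=
      hd.clm_apply (differentiableAt_const _)
    have h : HasPd a (pd b f) (fderiv ℝ (fderiv ℝ f) q (coordVec a) (coordVec b)) q := by
      refine HasPd.congr hU hq (g := fun r => fderiv ℝ f r (coordVec b))
        (fun r hr => pd_eq_fderiv (hasPd_of_contDiffOn hU hf hr b).1 b) ⟨hd', ?_⟩
      rw [pd_eq_fderiv hd', fderiv_clm_apply hd (differentiableAt_const _)]
      simp
    exact h.2
  rw [key, key]
  exact (hf.contDiffAt (hU.mem_nhds hq)).isSymmSndFDerivAt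
    (by simpa using WithTop.coe_le_coe.2 (le_top : (2 : ℕ∞) ≤ ⊤)) _ _

/-- Cross-differentiation: the integrability condition of `∂₀f = A`, `∂₁f = B`. -/
lemma cross_diff (hU : IsOpen U) (hf : ContDiffOn ℝ (⊤ : ℕ∞) f U) (hq : q ∈ U)
    {A B : ℝ × ℝ → ℝ} {A' B' : ℝ} (hA : ∀ r ∈ U, pd 0 f r = A r) (hB : ∀ r ∈ U, pd 1 f r = B r)
    (hA' : HasPd 1 A A' q) (hB' : HasPd 0 B B' q) : A' = B' := by
  rw [← (hA'.congr hU hq hA).2, ← (hB'.congr hU hq hB).2, pd_comm hU hf hq]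

end PdRules

/-! ### Metric compatibility -/

/-- At a point where `g` is nondegenerate, symmetric symbols `C` are the Christoffel symbols
of `g` iff they annihilate `g`, i.e. `∂_a g_{bc} = Cᵉ_{ab} g_{ec} + Cᵉ_{ac} g_{be}`. -/
lemma christoffel_iff_compat (E F G : ℝ × ℝ → ℝ) (q : ℝ × ℝ) (hΔ : E q * G q - F q ^ 2 ≠ 0)
    (C : Fin 2 → Fin 2 → Fin 2 → ℝ) (hC : ∀ c, C c 1 0 = C c 0 1) :
    (∀ c a b, C c a b = Christoffel E F G c a b q) ↔
      ∀ a, pd a E q = 2 * (C 0 a 0 * E q + C 1 a 0 * F q) ∧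
        pd a F q = C 0 a 0 * F q + C 1 a 0 * G q + C 0 a 1 * E q + C 1 a 1 * F q ∧
        pd a G q = 2 * (C 0 a 1 * F q + C 1 a 1 * G q) := by
  have hdet : (gmat E F G q).det = E q * G q - F q ^ 2 := by
    simp [gmat, Matrix.det_fin_two]; ring
  have hinv : (gmat E F G q)⁻¹ = (E q * G q - F q ^ 2)⁻¹ • !![G q, -F q; -F q, E q] := by
    rw [Matrix.inv_def, hdet, Ring.inverse_eq_inv', gmat, Matrix.adjugate_fin_two_of]
  simp only [Christoffel, hinv, Fin.forall_fin_two, Fin.sum_univ_two, hC]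
  simp only [gmat, Matrix.smul_apply, Matrix.of_apply, Matrix.cons_val_zero, Matrix.cons_val_one,
    Matrix.cons_val', Matrix.cons_val_fin_one, smul_eq_mul, Fin.isValue]
  constructor
  · rintro ⟨⟨⟨h1, h2⟩, -, h4⟩, ⟨h5, h6⟩, -, h8⟩
    rw [h1, h2, h4, h5, h6, h8]
    refine ⟨⟨?_, ?_, ?_⟩, ?_, ?_, ?_⟩ <;> field_simp <;> ring
  · rintro ⟨⟨h1, h2, h3⟩, h4, h5, h6⟩
    rw [h1, h2, h3, h4, h5, h6]
    refine ⟨⟨⟨?_, ?_⟩, ?_, ?_⟩, ⟨?_, ?_⟩, ?_, ?_⟩ <;> field_simp <;> ring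

/-! ### Integrability conditions -/

section Prolongation

variable {U : Set (ℝ × ℝ)} {Γ : Fin 2 → Fin 2 → Fin 2 → ℝ × ℝ → ℝ} {P : Fin 2 → Fin 2 → ℝ × ℝ → ℝ}

/-- The Schouten form of the curvature solved for the derivatives `∂₀Γᶜ_{1d}`. -/
lemma pd_zero_Γ
    (hΓsym : ∀ c a b, Γ c a b = Γ c b a)
    (hSchouten : ∀ c a b d : Fin 2, ∀ q ∈ U,
      Rcurv Γ c a b d q
        = (if c = a then P b d q else 0) - (if c = b then P a d q else 0))
    {q : ℝ × ℝ} (hq : q ∈ U) (c d : Fin 2) :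
    pd 0 (Γ c 1 d) q = pd 1 (Γ c 0 d) q
      - (Γ c 0 0 q * Γ 0 1 d q + Γ c 0 1 q * Γ 1 1 d q)
      + (Γ c 0 1 q * Γ 0 0 d q + Γ c 1 1 q * Γ 1 0 d q)
      + (if c = 0 then P 1 d q else 0) - (if c = 1 then P 0 d q else 0) := by
  have h := hSchouten c 0 1 d q hq
  simp only [Rcurv, Fin.sum_univ_two, hΓsym c 1 0] at h
  linear_combination h

/-- The integrability condition of the metrisability equation `∇_aσ^{bc} = δ_a^bμ^c + δ_a^cμ^b`:
the trace-free part of `∇_aμ^b + P_{ac}σ^{bc}` vanishes. Since the trace-free part is zero, `ρ` may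
be read off from the single component `a = b = 0`. -/
lemma mu_equation (hU : IsOpen U)
    (hΓsym : ∀ c a b, Γ c a b = Γ c b a)
    (hΓsm : ∀ c a b, ContDiffOn ℝ (⊤ : ℕ∞) (Γ c a b) U)
    (hPsym : ∀ a b, P a b = P b a)
    (hSchouten : ∀ c a b d : Fin 2, ∀ q ∈ U,
      Rcurv Γ c a b d q
        = (if c = a then P b d q else 0) - (if c = b then P a d q else 0))
    {σ : Fin 2 → Fin 2 → ℝ × ℝ → ℝ} {μ : Fin 2 → ℝ × ℝ → ℝ}
    (hσsym : ∀ a b, σ a b = σ b a)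
    (hσsm : ∀ a b, ContDiffOn ℝ (⊤ : ℕ∞) (σ a b) U)
    (hμsm : ∀ a, ContDiffOn ℝ (⊤ : ℕ∞) (μ a) U)
    (hσ : ∀ a b c : Fin 2, ∀ q ∈ U,
          pd a (σ b c) q + (∑ e : Fin 2, Γ b a e q * σ e c q)
              + (∑ e : Fin 2, Γ c a e q * σ b e q)
            - (if a = b then μ c q else 0) - (if a = c then μ b q else 0) = 0)
    {ρ : ℝ × ℝ → ℝ}
    (hρ : ∀ q, ρ q = pd 0 (μ 0) q + (∑ e : Fin 2, Γ 0 0 e q * μ e q)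
      + ∑ c : Fin 2, P 0 c q * σ 0 c q) :
    ∀ a b : Fin 2, ∀ q ∈ U,
          pd a (μ b) q + (∑ e : Fin 2, Γ b a e q * μ e q)
            - (if a = b then ρ q else 0)
            + (∑ c : Fin 2, P a c q * σ b c q) = 0 := by
  intro a b q hq
  have dΓ : ∀ d c a b, HasPd d (Γ c a b) (pd d (Γ c a b) q) q :=
    fun d c a b => hasPd_of_contDiffOn hU (hΓsm c a b) hq d
  have dσ : ∀ d a b, HasPd d (σ a b) (pd d (σ a b) q) q :=
    fun d a b => hasPd_of_contDiffOn hU (hσsm a b) hq d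
  have dμ : ∀ d a, HasPd d (μ a) (pd d (μ a) q) q :=
    fun d a => hasPd_of_contDiffOn hU (hμsm a) hq d
  have eσ : ∀ a b c : Fin 2, ∀ r ∈ U, pd a (σ b c) r =
      (if a = b then 1 else 0) * μ c r + (if a = c then 1 else 0) * μ b r
        - (Γ b a 0 r * σ 0 c r + Γ b a 1 r * σ 1 c r)
        - (Γ c a 0 r * σ b 0 r + Γ c a 1 r * σ b 1 r) := by
    intro a b c r hr
    have h := hσ a b c r hr
    simp only [Fin.sum_univ_two] at h
    simp only [ite_mul, one_mul, zero_mul]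
    linear_combination h
  -- `∂₁∂₀σ^{bc} = ∂₀∂₁σ^{bc}` with both first derivatives replaced by their expressions
  have comm := fun b c => cross_diff hU (hσsm b c) hq (eσ 0 b c) (eσ 1 b c)
    (((((dμ 1 c).const_mul _).add ((dμ 1 b).const_mul _)).sub
      (((dΓ 1 b 0 0).mul (dσ 1 0 c)).add ((dΓ 1 b 0 1).mul (dσ 1 1 c)))).sub
      (((dΓ 1 c 0 0).mul (dσ 1 b 0)).add ((dΓ 1 c 0 1).mul (dσ 1 b 1))))
    (((((dμ 0 c).const_mul _).add ((dμ 0 b).const_mul _)).sub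
      (((dΓ 0 b 1 0).mul (dσ 0 0 c)).add ((dΓ 0 b 1 1).mul (dσ 0 1 c)))).sub
      (((dΓ 0 c 1 0).mul (dσ 0 b 0)).add ((dΓ 0 c 1 1).mul (dσ 0 b 1))))
  have hΓ0 := pd_zero_Γ hΓsym hSchouten hq
  have h00 := comm 0 0
  have h01 := comm 0 1
  have h11 := comm 1 1
  have hρq := hρ q
  simp only [hΓ0, eσ _ _ _ q hq] at h00 h01 h11
  simp only [Fin.sum_univ_two] at hρq
  fin_cases a <;> fin_cases b <;>
    simp [Fin.sum_univ_two, hΓsym _ 1 0, hσsym 1 0, hPsym 1 0] at h00 h01 h11 hρq ⊢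
  · linear_combination -hρq
  · linear_combination (-1/2) * h11
  · linear_combination (1/2) * h00
  · linear_combination h01 - hρq

/-- The integrability condition of `∇_aμ^b = δ_a^bρ - P_{ac}σ^{bc}`: the `b`-component of
`[∇₀, ∇₁]μ^b` contains `∂₁ρ` for `b = 0` and `∂₀ρ` for `b = 1`. -/
lemma rho_equation (hU : IsOpen U)
    (hΓsym : ∀ c a b, Γ c a b = Γ c b a)
    (hΓsm : ∀ c a b, ContDiffOn ℝ (⊤ : ℕ∞) (Γ c a b) U)
    (hPsym : ∀ a b, P a b = P b a)
    (hPsm : ∀ a b, ContDiffOn ℝ (⊤ : ℕ∞) (P a b) U)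
    (hSchouten : ∀ c a b d : Fin 2, ∀ q ∈ U,
      Rcurv Γ c a b d q
        = (if c = a then P b d q else 0) - (if c = b then P a d q else 0))
    {σ : Fin 2 → Fin 2 → ℝ × ℝ → ℝ} {μ : Fin 2 → ℝ × ℝ → ℝ} {ρ : ℝ × ℝ → ℝ}
    (hσsym : ∀ a b, σ a b = σ b a)
    (hσsm : ∀ a b, ContDiffOn ℝ (⊤ : ℕ∞) (σ a b) U)
    (hμsm : ∀ a, ContDiffOn ℝ (⊤ : ℕ∞) (μ a) U)
    (hρsm : ContDiffOn ℝ (⊤ : ℕ∞) ρ U)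
    (hσ : ∀ a b c : Fin 2, ∀ q ∈ U,
          pd a (σ b c) q + (∑ e : Fin 2, Γ b a e q * σ e c q)
              + (∑ e : Fin 2, Γ c a e q * σ b e q)
            - (if a = b then μ c q else 0) - (if a = c then μ b q else 0) = 0)
    (hμ : ∀ a b : Fin 2, ∀ q ∈ U,
          pd a (μ b) q + (∑ e : Fin 2, Γ b a e q * μ e q)
            - (if a = b then ρ q else 0)
            + (∑ c : Fin 2, P a c q * σ b c q) = 0) :
    ∀ a : Fin 2, ∀ q ∈ U,
          pd a ρ q + 2 * (∑ b : Fin 2, P a b q * μ b q)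
            - 2 * (∑ b : Fin 2, ∑ c : Fin 2,
                (1/2) * (covD2 Γ P a b c q - covD2 Γ P b a c q) * σ b c q) = 0 := by
  intro a q hq
  have dΓ : ∀ d c a b, HasPd d (Γ c a b) (pd d (Γ c a b) q) q :=
    fun d c a b => hasPd_of_contDiffOn hU (hΓsm c a b) hq d
  have dP : ∀ d a b, HasPd d (P a b) (pd d (P a b) q) q :=
    fun d a b => hasPd_of_contDiffOn hU (hPsm a b) hq d
  have dσ : ∀ d a b, HasPd d (σ a b) (pd d (σ a b) q) q :=
    fun d a b => hasPd_of_contDiffOn hU (hσsm a b) hq d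
  have dμ : ∀ d a, HasPd d (μ a) (pd d (μ a) q) q :=
    fun d a => hasPd_of_contDiffOn hU (hμsm a) hq d
  have dρ : ∀ d, HasPd d ρ (pd d ρ q) q := fun d => hasPd_of_contDiffOn hU hρsm hq d
  have eσ : ∀ a b c : Fin 2, pd a (σ b c) q =
      (if a = b then 1 else 0) * μ c q + (if a = c then 1 else 0) * μ b q
        - (Γ b a 0 q * σ 0 c q + Γ b a 1 q * σ 1 c q)
        - (Γ c a 0 q * σ b 0 q + Γ c a 1 q * σ b 1 q) := by
    intro a b c
    have h := hσ a b c q hq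
    simp only [Fin.sum_univ_two] at h
    simp only [ite_mul, one_mul, zero_mul]
    linear_combination h
  have eμ : ∀ a b : Fin 2, ∀ r ∈ U, pd a (μ b) r =
      (if a = b then 1 else 0) * ρ r - (Γ b a 0 r * μ 0 r + Γ b a 1 r * μ 1 r)
        - (P a 0 r * σ b 0 r + P a 1 r * σ b 1 r) := by
    intro a b r hr
    have h := hμ a b r hr
    simp only [Fin.sum_univ_two] at h
    simp only [ite_mul, one_mul, zero_mul]
    linear_combination h
  -- `∂₁∂₀μ^b = ∂₀∂₁μ^b` with both first derivatives replaced by their expressions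
  have comm := fun b => cross_diff hU (hμsm b) hq (eμ 0 b) (eμ 1 b)
    ((((dρ 1).const_mul _).sub
      (((dΓ 1 b 0 0).mul (dμ 1 0)).add ((dΓ 1 b 0 1).mul (dμ 1 1)))).sub
      (((dP 1 0 0).mul (dσ 1 b 0)).add ((dP 1 0 1).mul (dσ 1 b 1))))
    ((((dρ 0).const_mul _).sub
      (((dΓ 0 b 1 0).mul (dμ 0 0)).add ((dΓ 0 b 1 1).mul (dμ 0 1)))).sub
      (((dP 0 1 0).mul (dσ 0 b 0)).add ((dP 0 1 1).mul (dσ 0 b 1))))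
  have hΓ0 := pd_zero_Γ hΓsym hSchouten hq
  have h0 := comm 0
  have h1 := comm 1
  simp only [hΓ0, eσ, eμ _ _ q hq] at h0 h1
  fin_cases a <;>
    simp [covD2, Fin.sum_univ_two, hΓsym _ 1 0, hσsym 1 0, hPsym 1 0] at h0 h1 ⊢
  · linear_combination -h1
  · linear_combination h0

end Prolongation

/-! ### Metrics and solutions of the metrisability equation -/

/-- The trace `Γᵉ_{ae}` governs the parallel bivector: `∂_aε^{01} = -Γᵉ_{ae}ε^{01}`. -/
lemma pd_eps {U : Set (ℝ × ℝ)} {Γ : Fin 2 → Fin 2 → Fin 2 → ℝ × ℝ → ℝ}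
    {ε : Fin 2 → Fin 2 → ℝ × ℝ → ℝ}
    (hεskew : ∀ a b q, ε a b q = -ε b a q)
    (hεpar : ∀ a b c : Fin 2, ∀ q ∈ U,
      pd a (ε b c) q + (∑ e : Fin 2, Γ b a e q * ε e c q)
        + (∑ e : Fin 2, Γ c a e q * ε b e q) = 0)
    (a : Fin 2) {q : ℝ × ℝ} (hq : q ∈ U) :
    pd a (ε 0 1) q = -(Γ 0 a 0 q + Γ 1 a 1 q) * ε 0 1 q := by
  have h := hεpar a 0 1 q hq
  have h0 := hεskew 0 0 q
  have h1 := hεskew 1 1 q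
  simp only [Fin.sum_univ_two] at h
  linear_combination h - Γ 1 a 0 q / 2 * h0 - Γ 0 a 1 q / 2 * h1

/-- From a metric in the projective class to the metrisability equation: the solution is
`σ^{ab} = (ε² det g)^{1/3} g^{ab}`, written as `σ = h · adj g` with `h = (ε²/(det g)²)^{1/3}` so that
the cube root is taken of a positive number, together with `μ^a = -σ^{ab}ω_b`. The function `e`
is the component `ε^{01}`. -/
lemma exists_sigma_of_metric {U : Set (ℝ × ℝ)} (hU : IsOpen U)
    {Γ : Fin 2 → Fin 2 → Fin 2 → ℝ × ℝ → ℝ} (hΓsym : ∀ c a b, Γ c a b = Γ c b a)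
    {e : ℝ × ℝ → ℝ} (hene : ∀ q ∈ U, e q ≠ 0) (hesm : ContDiffOn ℝ (⊤ : ℕ∞) e U)
    (he : ∀ a, ∀ q ∈ U, pd a e q = -(Γ 0 a 0 q + Γ 1 a 1 q) * e q)
    (hg : ProjEquivLeviCivita U Γ) :
    ∃ σ : Fin 2 → Fin 2 → ℝ × ℝ → ℝ, ∃ μ : Fin 2 → ℝ × ℝ → ℝ,
        (∀ a b, σ a b = σ b a) ∧
        (∀ a b, ContDiffOn ℝ (⊤ : ℕ∞) (σ a b) U) ∧
        (∀ a, ContDiffOn ℝ (⊤ : ℕ∞) (μ a) U) ∧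
        (∀ q ∈ U, σ 0 0 q * σ 1 1 q - σ 0 1 q * σ 1 0 q ≠ 0) ∧
        (∀ a b c : Fin 2, ∀ q ∈ U,
          pd a (σ b c) q + (∑ e : Fin 2, Γ b a e q * σ e c q)
              + (∑ e : Fin 2, Γ c a e q * σ b e q)
            - (if a = b then μ c q else 0) - (if a = c then μ b q else 0) = 0) := by
  obtain ⟨ω, hωsm, E, F, G, hE, hF, hG, hΔ, hC⟩ := hg
  have compat : ∀ q ∈ U, _ := fun q hq =>
    (christoffel_iff_compat E F G q (hΔ q hq)
      (fun c a b => Γ c a b q + (if c = a then ω b q else 0) + (if c = b then ω a q else 0))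
      (fun c => by rw [hΓsym c 1 0]; ring)).1 (fun c a b => hC c a b q hq)
  set Δ : ℝ × ℝ → ℝ := fun q => E q * G q - F q * F q with hΔdef
  have hΔ0 : ∀ q ∈ U, Δ q ≠ 0 := fun q hq => by
    simpa [hΔdef, pow_two] using hΔ q hq
  have hΔsm : ContDiffOn ℝ (⊤ : ℕ∞) Δ U := (hE.mul hG).sub (hF.mul hF)
  set h : ℝ × ℝ → ℝ := fun q => ((e q / Δ q) ^ 2) ^ (1 / 3 : ℝ) with hhdef
  have hpos : ∀ q ∈ U, 0 < (e q / Δ q) ^ 2 := fun q hq =>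
    sq_pos_of_ne_zero (div_ne_zero (hene q hq) (hΔ0 q hq))
  have hhpos : ∀ q ∈ U, 0 < h q := fun q hq => Real.rpow_pos_of_pos (hpos q hq) _
  have hhsm : ContDiffOn ℝ (⊤ : ℕ∞) h U :=
    ((hesm.div hΔsm hΔ0).pow 2).rpow_const_of_ne fun q hq => (hpos q hq).ne'
  have hcube : ∀ q ∈ U, h q * h q * h q * (Δ q * Δ q) = e q * e q := by
    intro q hq
    have h3 : h q ^ 3 = (e q / Δ q) ^ 2 := by
      rw [hhdef]
      simp only
      rw [← Real.rpow_natCast, ← Real.rpow_mul (hpos q hq).le]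
      norm_num
    have := hΔ0 q hq
    have h4 : h q * h q * h q = (e q / Δ q) ^ 2 := by rw [← h3]; ring
    rw [h4]
    field_simp
  -- logarithmic differentiation of `h³Δ² = e²`
  have hpd : ∀ a, ∀ q ∈ U, HasPd a h (h q * (-4 * ω a q - 2 * (Γ 0 a 0 q + Γ 1 a 1 q))) q := by
    intro a q hq
    have dh := hasPd_of_contDiffOn hU hhsm hq a
    have dE := hasPd_of_contDiffOn hU hE hq a
    have dF := hasPd_of_contDiffOn hU hF hq a
    have dG := hasPd_of_contDiffOn hU hG hq a
    have de := hasPd_of_contDiffOn hU hesm hq a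
    have dΔ : HasPd a Δ _ q := (dE.mul dG).sub (dF.mul dF)
    have k := ((de.mul de).congr hU hq hcube).2.symm.trans
      (((dh.mul dh).mul dh).mul (dΔ.mul dΔ)).2
    refine ⟨dh.1, ?_⟩
    have hne : 3 * (h q * h q * (Δ q * Δ q)) ≠ 0 := by
      have := (hhpos q hq).ne'
      have := hΔ0 q hq
      positivity
    apply mul_left_cancel₀ hne
    have hc := hcube q hq
    obtain ⟨c1, c2, c3⟩ := compat q hq a
    rw [he a q hq, c1, c2, c3] at k
    fin_cases a <;> simp [-mul_eq_mul_left_iff, hΓsym _ 1 0] at k ⊢ <;> simp only [hΔdef] at k hc ⊢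
    · linear_combination -k + 2 * (Γ 0 0 0 q + Γ 1 0 1 q) * hc
    · linear_combination -k + 2 * (Γ 0 0 1 q + Γ 1 1 1 q) * hc
  refine ⟨![![fun q => h q * G q, fun q => -(h q * F q)],
      ![fun q => -(h q * F q), fun q => h q * E q]],
    ![fun q => h q * (F q * ω 1 q - G q * ω 0 q), fun q => h q * (F q * ω 0 q - E q * ω 1 q)],
    ?_, ?_, ?_, ?_, ?_⟩
  · simp [Fin.forall_fin_two]
  · have hσ01 := (hhsm.mul hF).neg
    exact Fin.forall_fin_two.2 ⟨Fin.forall_fin_two.2 ⟨hhsm.mul hG, hσ01⟩,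
      Fin.forall_fin_two.2 ⟨hσ01, hhsm.mul hE⟩⟩
  · exact Fin.forall_fin_two.2 ⟨hhsm.mul ((hF.mul (hωsm 1)).sub (hG.mul (hωsm 0))),
      hhsm.mul ((hF.mul (hωsm 0)).sub (hE.mul (hωsm 1)))⟩
  · intro q hq
    have : h q * h q * Δ q ≠ 0 :=
      mul_ne_zero (mul_ne_zero (hhpos q hq).ne' (hhpos q hq).ne') (hΔ0 q hq)
    convert this using 1
    simp [hΔdef]
    ring
  · intro a b c q hq
    have dh := hpd a q hq
    have dE := (dh.mul (hasPd_of_contDiffOn hU hE hq a)).2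
    have dF := (dh.mul (hasPd_of_contDiffOn hU hF hq a)).neg.2
    have dG := (dh.mul (hasPd_of_contDiffOn hU hG hq a)).2
    obtain ⟨c1, c2, c3⟩ := compat q hq a
    rw [c1] at dE
    rw [c2] at dF
    rw [c3] at dG
    fin_cases a <;> fin_cases b <;> fin_cases c <;>
      simp [Fin.sum_univ_two, hΓsym _ 1 0] at dE dF dG ⊢ <;>
      first | (rw [dE]; ring) | (rw [dF]; ring) | (rw [dG]; ring)

/-- From a nondegenerate solution of the metrisability equation to a metric in the projective
class: `g_{ab} = (ε²/(det σ)²) · (adj σ)_{ab}` and `ω_a = -(σ⁻¹)_{ab}μ^b`.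
The function `e` is the component `ε^{01}`. -/
lemma metric_of_sigma {U : Set (ℝ × ℝ)} (hU : IsOpen U)
    {Γ : Fin 2 → Fin 2 → Fin 2 → ℝ × ℝ → ℝ} (hΓsym : ∀ c a b, Γ c a b = Γ c b a)
    {e : ℝ × ℝ → ℝ} (hene : ∀ q ∈ U, e q ≠ 0) (hesm : ContDiffOn ℝ (⊤ : ℕ∞) e U)
    (he : ∀ a, ∀ q ∈ U, pd a e q = -(Γ 0 a 0 q + Γ 1 a 1 q) * e q)
    {σ : Fin 2 → Fin 2 → ℝ × ℝ → ℝ} {μ : Fin 2 → ℝ × ℝ → ℝ}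
    (hσsym : ∀ a b, σ a b = σ b a)
    (hσsm : ∀ a b, ContDiffOn ℝ (⊤ : ℕ∞) (σ a b) U)
    (hμsm : ∀ a, ContDiffOn ℝ (⊤ : ℕ∞) (μ a) U)
    (hdet : ∀ q ∈ U, σ 0 0 q * σ 1 1 q - σ 0 1 q * σ 1 0 q ≠ 0)
    (hσ : ∀ a b c : Fin 2, ∀ q ∈ U,
          pd a (σ b c) q + (∑ e : Fin 2, Γ b a e q * σ e c q)
              + (∑ e : Fin 2, Γ c a e q * σ b e q)
            - (if a = b then μ c q else 0) - (if a = c then μ b q else 0) = 0) :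
    ProjEquivLeviCivita U Γ := by
  set D : ℝ × ℝ → ℝ := fun q => σ 0 0 q * σ 1 1 q - σ 0 1 q * σ 0 1 q with hDdef
  have hD0 : ∀ q ∈ U, D q ≠ 0 := fun q hq => by simpa [hDdef, hσsym 1 0] using hdet q hq
  have hDsm : ContDiffOn ℝ (⊤ : ℕ∞) D U :=
    ((hσsm 0 0).mul (hσsm 1 1)).sub ((hσsm 0 1).mul (hσsm 0 1))
  set ω : Fin 2 → ℝ × ℝ → ℝ := ![fun q => (σ 0 1 q * μ 1 q - σ 1 1 q * μ 0 q) / D q,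
    fun q => (σ 0 1 q * μ 0 q - σ 0 0 q * μ 1 q) / D q] with hωdef
  have hωsm : ∀ a, ContDiffOn ℝ (⊤ : ℕ∞) (ω a) U :=
    Fin.forall_fin_two.2
      ⟨(((hσsm 0 1).mul (hμsm 1)).sub ((hσsm 1 1).mul (hμsm 0))).div hDsm hD0,
        (((hσsm 0 1).mul (hμsm 0)).sub ((hσsm 0 0).mul (hμsm 1))).div hDsm hD0⟩
  -- `μ^a = -σ^{ab}ω_b`, which keeps the computations below polynomial
  have hμω : ∀ q ∈ U, μ 0 q = -(σ 0 0 q * ω 0 q + σ 0 1 q * ω 1 q) ∧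
      μ 1 q = -(σ 0 1 q * ω 0 q + σ 1 1 q * ω 1 q) := by
    intro q hq
    have := hD0 q hq
    simp only [hωdef, Matrix.cons_val_zero, Matrix.cons_val_one]
    constructor <;> field_simp <;> simp only [hDdef] <;> ring
  have eσ : ∀ a b c : Fin 2, ∀ r ∈ U, pd a (σ b c) r =
      (if a = b then 1 else 0) * μ c r + (if a = c then 1 else 0) * μ b r
        - (Γ b a 0 r * σ 0 c r + Γ b a 1 r * σ 1 c r)
        - (Γ c a 0 r * σ b 0 r + Γ c a 1 r * σ b 1 r) := by
    intro a b c r hr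
    have h := hσ a b c r hr
    simp only [Fin.sum_univ_two] at h
    simp only [ite_mul, one_mul, zero_mul]
    linear_combination h
  set k : ℝ × ℝ → ℝ := fun q => e q * e q / (D q * D q) with hkdef
  have hk0 : ∀ q ∈ U, k q ≠ 0 := fun q hq =>
    div_ne_zero (mul_ne_zero (hene q hq) (hene q hq)) (mul_ne_zero (hD0 q hq) (hD0 q hq))
  have hksm : ContDiffOn ℝ (⊤ : ℕ∞) k U :=
    (hesm.mul hesm).div (hDsm.mul hDsm) fun q hq => mul_ne_zero (hD0 q hq) (hD0 q hq)
  have hkD : ∀ q ∈ U, k q * (D q * D q) = e q * e q := fun q hq =>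
    div_mul_cancel₀ _ (mul_ne_zero (hD0 q hq) (hD0 q hq))
  -- logarithmic differentiation of `kD² = e²`
  have hpd : ∀ a, ∀ q ∈ U, HasPd a k (k q * (4 * ω a q + 2 * (Γ 0 a 0 q + Γ 1 a 1 q))) q := by
    intro a q hq
    have dk := hasPd_of_contDiffOn hU hksm hq a
    have d00 := hasPd_of_contDiffOn hU (hσsm 0 0) hq a
    have d01 := hasPd_of_contDiffOn hU (hσsm 0 1) hq a
    have d11 := hasPd_of_contDiffOn hU (hσsm 1 1) hq a
    have de := hasPd_of_contDiffOn hU hesm hq a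
    have dD : HasPd a D _ q := (d00.mul d11).sub (d01.mul d01)
    have j := ((de.mul de).congr hU hq hkD).2.symm.trans (dk.mul (dD.mul dD)).2
    refine ⟨dk.1, ?_⟩
    apply mul_left_cancel₀ (mul_ne_zero (hD0 q hq) (hD0 q hq))
    have hc := hkD q hq
    obtain ⟨m0, m1⟩ := hμω q hq
    rw [he a q hq, eσ _ _ _ q hq, eσ _ _ _ q hq, eσ _ _ _ q hq] at j
    clear_value ω k
    fin_cases a <;> simp [-mul_eq_mul_left_iff, hΓsym _ 1 0, hσsym 1 0, m0, m1] at j ⊢ <;>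
      simp only [hDdef] at j hc ⊢
    · linear_combination -j + 2 * (Γ 0 0 0 q + Γ 1 0 1 q) * hc
    · linear_combination -j + 2 * (Γ 0 0 1 q + Γ 1 1 1 q) * hc
  have hΔ : ∀ q ∈ U, k q * σ 1 1 q * (k q * σ 0 0 q) - (-(k q * σ 0 1 q)) ^ 2 ≠ 0 := by
    intro q hq
    have : k q * k q * D q ≠ 0 := mul_ne_zero (mul_ne_zero (hk0 q hq) (hk0 q hq)) (hD0 q hq)
    convert this using 1
    simp only [hDdef]
    ring
  refine ⟨ω, hωsm, fun q => k q * σ 1 1 q, fun q => -(k q * σ 0 1 q), fun q => k q * σ 0 0 q,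
    hksm.mul (hσsm 1 1), (hksm.mul (hσsm 0 1)).neg, hksm.mul (hσsm 0 0), hΔ, ?_⟩
  suffices h : ∀ q ∈ U, ∀ c a b : Fin 2, _ from fun c a b q hq => h q hq c a b
  intro q hq
  refine (christoffel_iff_compat _ _ _ q (hΔ q hq)
      (fun c a b => Γ c a b q + (if c = a then ω b q else 0) + (if c = b then ω a q else 0))
      (fun c => by rw [hΓsym c 1 0]; ring)).2 fun a => ?_
  have dk := hpd a q hq
  rw [(dk.mul (hasPd_of_contDiffOn hU (hσsm 1 1) hq a)).2,
    (dk.mul (hasPd_of_contDiffOn hU (hσsm 0 1) hq a)).neg.2,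
    (dk.mul (hasPd_of_contDiffOn hU (hσsm 0 0) hq a)).2,
    eσ _ _ _ q hq, eσ _ _ _ q hq, eσ _ _ _ q hq]
  obtain ⟨m0, m1⟩ := hμω q hq
  clear_value ω k
  fin_cases a <;> simp [hΓsym _ 1 0, hσsym 1 0, m0, m1] <;> refine ⟨?_, ?_, ?_⟩ <;> ring

/-- **Prolongation theorem for metrisability.** `∇` is projectively equivalent to a
Levi–Civita connection iff there are tensors `(σ^{ab}, μ^a, ρ)` with `σ` symmetric and
nondegenerate solving the closed linear system of the prolonged metrisability equations. -/
theorem prolongation_metrisability (U : Set (ℝ × ℝ)) (hU : IsOpen U)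
    (Γ : Fin 2 → Fin 2 → Fin 2 → ℝ × ℝ → ℝ)
    (hΓsym : ∀ c a b, Γ c a b = Γ c b a)
    (hΓsm : ∀ c a b, ContDiffOn ℝ (⊤ : ℕ∞) (Γ c a b) U)
    (ε : Fin 2 → Fin 2 → ℝ × ℝ → ℝ)
    (hεskew : ∀ a b q, ε a b q = -ε b a q)
    (hεne : ∀ q ∈ U, ε 0 1 q ≠ 0)
    (hεsm : ∀ a b, ContDiffOn ℝ (⊤ : ℕ∞) (ε a b) U)
    (hεpar : ∀ a b c : Fin 2, ∀ q ∈ U,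
      pd a (ε b c) q + (∑ e : Fin 2, Γ b a e q * ε e c q)
        + (∑ e : Fin 2, Γ c a e q * ε b e q) = 0)
    (P : Fin 2 → Fin 2 → ℝ × ℝ → ℝ)
    (hPsym : ∀ a b, P a b = P b a)
    (hPsm : ∀ a b, ContDiffOn ℝ (⊤ : ℕ∞) (P a b) U)
    (hSchouten : ∀ c a b d : Fin 2, ∀ q ∈ U,
      Rcurv Γ c a b d q
        = (if c = a then P b d q else 0) - (if c = b then P a d q else 0)) :
    ProjEquivLeviCivita U Γ ↔
      ∃ σ : Fin 2 → Fin 2 → ℝ × ℝ → ℝ, ∃ μ : Fin 2 → ℝ × ℝ → ℝ, ∃ ρ : ℝ × ℝ → ℝ,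
        (∀ a b, σ a b = σ b a) ∧
        (∀ a b, ContDiffOn ℝ (⊤ : ℕ∞) (σ a b) U) ∧
        (∀ a, ContDiffOn ℝ (⊤ : ℕ∞) (μ a) U) ∧
        ContDiffOn ℝ (⊤ : ℕ∞) ρ U ∧
        (∀ q ∈ U, σ 0 0 q * σ 1 1 q - σ 0 1 q * σ 1 0 q ≠ 0) ∧
        (∀ a b c : Fin 2, ∀ q ∈ U,
          pd a (σ b c) q + (∑ e : Fin 2, Γ b a e q * σ e c q)
              + (∑ e : Fin 2, Γ c a e q * σ b e q)
            - (if a = b then μ c q else 0) - (if a = c then μ b q else 0) = 0) ∧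
        (∀ a b : Fin 2, ∀ q ∈ U,
          pd a (μ b) q + (∑ e : Fin 2, Γ b a e q * μ e q)
            - (if a = b then ρ q else 0)
            + (∑ c : Fin 2, P a c q * σ b c q) = 0) ∧
        (∀ a : Fin 2, ∀ q ∈ U,
          pd a ρ q + 2 * (∑ b : Fin 2, P a b q * μ b q)
            - 2 * (∑ b : Fin 2, ∑ c : Fin 2,
                (1/2) * (covD2 Γ P a b c q - covD2 Γ P b a c q) * σ b c q) = 0) := by
  have he := fun a q hq => pd_eps (U := U) hεskew hεpar a (q := q) hq
  constructor
  · intro hg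
    obtain ⟨σ, μ, hσsym, hσsm, hμsm, hdet, hσ⟩ :=
      exists_sigma_of_metric hU hΓsym hεne (hεsm 0 1) he hg
    have hρsm : ContDiffOn ℝ (⊤ : ℕ∞) (fun q => pd 0 (μ 0) q + (∑ e : Fin 2, Γ 0 0 e q * μ e q)
        + ∑ c : Fin 2, P 0 c q * σ 0 c q) U :=
      ((contDiffOn_pd hU (hμsm 0) 0).add
        (ContDiffOn.sum fun e _ => (hΓsm 0 0 e).mul (hμsm e))).add
        (ContDiffOn.sum fun c _ => (hPsm 0 c).mul (hσsm 0 c))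
    have hμ := mu_equation hU hΓsym hΓsm hPsym hSchouten hσsym hσsm hμsm hσ (fun _ => rfl)
    exact ⟨σ, μ, _, hσsym, hσsm, hμsm, hρsm, hdet, hσ, hμ,
      rho_equation hU hΓsym hΓsm hPsym hPsm hSchouten hσsym hσsm hμsm hρsm hσ hμ⟩
  · rintro ⟨σ, μ, ρ, hσsym, hσsm, hμsm, -, hdet, hσ, -, -⟩
    exact metric_of_sigma hU hΓsym hεne (hεsm 0 1) he hσsym hσsm hμsm hdet hσ
end
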